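/- The atomic cut rule ai↑ is derivable from shallow atomic cut and switch: every instance of ai↑, with premise C(a,ā) and conclusion C{f}, can be replaced by a derivation from C(a,ā) to C{f} using only the switch rule s and shallow instances of ai↑, i.e. instances of the form inferring S from [S,(a,ā)]. -/

import Mathlib

/-!
Switch alone can move the content `X` of a hole to the root of the formula: there is a
derivation from `C{X}` to `[C{f},X]` (`extrude`). By induction on the context, a disjunctive
frame is passed by associativity and commutativity, and a conjunctive frame by one switch,
`(Q,[C{f},X]) ⟶ [(Q,C{f}),X]`. The empty context is the unit law `X = [f,X]`.
For `X = (a,ā)` the resulting formula `[C{f},(a,ā)]` is the premise of a shallow cut whose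
conclusion is `C{f}`.
-/

/-!
Deep-inference systems SKSg, SKS and KS for classical propositional logic
(the calculus of structures).  Formulas are built from atoms `a`, their
negations `ā`, and the units `t` (true) and `f` (false) by disjunction
`[P,Q]` (`dis`) and conjunction `(P,Q)` (`con`), and are considered modulo
the congruence `Equiv` generated by associativity, commutativity and the
unit laws.  Rules apply inside an arbitrary one-hole context and modulo the
equivalence.
-/

namespace DI

/-- Formulas of the calculus of structures for classical logic:
units `t`, `f`; atoms `pos a`; negated atoms `neg a`; disjunction `dis`
(written `[P,Q]`); conjunction `con` (written `(P,Q)`). -/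
inductive F : Type where
  | tt  : F
  | ff  : F
  | pos : ℕ → F
  | neg : ℕ → F
  | dis : F → F → F
  | con : F → F → F
deriving DecidableEq

/-- Negation, pushed to the atoms by the De Morgan laws:
`¬t = f`, `¬f = t`, `¬[P,Q] = (¬P,¬Q)`, `¬(P,Q) = [¬P,¬Q]`, `¬¬P = P`. -/
def F.negF : F → F
  | .tt => .ff
  | .ff => .tt
  | .pos a => .neg a
  | .neg a => .pos a
  | .dis P Q => .con P.negF Q.negF
  | .con P Q => .dis P.negF Q.negF

/-- Atoms are the propositional symbols and their negations. -/
def F.isAtom : F → Prop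
  | .pos _ => True
  | .neg _ => True
  | _ => False

/-- Syntactic equivalence of formulas: the smallest congruence generated by
associativity and commutativity of both connectives and the unit laws
`[t,t]=t`, `(f,f)=f`, `[f,P]=P`, `(t,P)=P`. -/
inductive Equiv : F → F → Prop where
  | refl (P : F) : Equiv P P
  | symm {P Q : F} : Equiv P Q → Equiv Q P
  | trans {P Q R : F} : Equiv P Q → Equiv Q R → Equiv P R
  | disComm (P Q : F) : Equiv (.dis P Q) (.dis Q P)
  | conComm (P Q : F) : Equiv (.con P Q) (.con Q P)
  | disAssoc (P Q R : F) : Equiv (.dis (.dis P Q) R) (.dis P (.dis Q R))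
  | conAssoc (P Q R : F) : Equiv (.con (.con P Q) R) (.con P (.con Q R))
  | ttDis : Equiv (.dis .tt .tt) .tt
  | ffCon : Equiv (.con .ff .ff) .ff
  | ffDis (P : F) : Equiv (.dis .ff P) P
  | ttCon (P : F) : Equiv (.con .tt P) P
  | disCongr {P P' Q Q' : F} :
      Equiv P P' → Equiv Q Q' → Equiv (.dis P Q) (.dis P' Q')
  | conCongr {P P' Q Q' : F} :
      Equiv P P' → Equiv Q Q' → Equiv (.con P Q) (.con P' Q')

/-- One-hole contexts. -/
inductive Ctx : Type where
  | hole : Ctx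
  | disL : Ctx → F → Ctx
  | disR : F → Ctx → Ctx
  | conL : Ctx → F → Ctx
  | conR : F → Ctx → Ctx

/-- Plugging a formula into the hole of a context. -/
def Ctx.fill : Ctx → F → F
  | .hole, P => P
  | .disL C Q, P => .dis (C.fill P) Q
  | .disR Q C, P => .dis Q (C.fill P)
  | .conL C Q, P => .con (C.fill P) Q
  | .conR Q C, P => .con Q (C.fill P)

/-- Names of the inference rules of SKSg and SKS. -/
inductive Rule : Type where
  | iDown | iUp | wDown | wUp | cDown | cUp | s | m
  | aiDown | aiUp | awDown | awUp | acDown | acUp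
deriving DecidableEq

/-- The rules, read at the root of a formula (premise on the left,
conclusion on the right). -/
inductive RootStep : Rule → F → F → Prop where
  | iDown (P : F) : RootStep .iDown .tt (.dis P P.negF)
  | iUp (P : F) : RootStep .iUp (.con P P.negF) .ff
  | wDown (P : F) : RootStep .wDown .ff P
  | wUp (P : F) : RootStep .wUp P .tt
  | cDown (P : F) : RootStep .cDown (.dis P P) P
  | cUp (P : F) : RootStep .cUp P (.con P P)
  | s (P Q R : F) : RootStep .s (.con P (.dis Q R)) (.dis (.con P Q) R)
  | m (P Q R S : F) :
      RootStep .m (.dis (.con P Q) (.con R S)) (.con (.dis P R) (.dis Q S))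
  | aiDown (A : F) (h : A.isAtom) : RootStep .aiDown .tt (.dis A A.negF)
  | aiUp (A : F) (h : A.isAtom) : RootStep .aiUp (.con A A.negF) .ff
  | awDown (A : F) (h : A.isAtom) : RootStep .awDown .ff A
  | awUp (A : F) (h : A.isAtom) : RootStep .awUp A .tt
  | acDown (A : F) (h : A.isAtom) : RootStep .acDown (.dis A A) A
  | acUp (A : F) (h : A.isAtom) : RootStep .acUp A (.con A A)

/-- One inference step using a rule from the set `Rs`, applied inside an
arbitrary context and modulo the equivalence. -/
def Step (Rs : Set Rule) (P Q : F) : Prop :=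
  ∃ r ∈ Rs, ∃ (C : Ctx) (P' Q' : F),
    RootStep r P' Q' ∧ Equiv P (C.fill P') ∧ Equiv (C.fill Q') Q

/-- Derivations over an arbitrary step relation: a finite sequence of rule
instances from the premise to the conclusion (modulo the equivalence). -/
inductive Deriv (St : F → F → Prop) : F → F → Prop where
  | eqv {P Q : F} : Equiv P Q → Deriv St P Q
  | step {P Q R : F} : St P Q → Deriv St Q R → Deriv St P R

/-- The system SKSg: general (non-atomic) rules plus switch. -/
def SKSg : Set Rule := {.iDown, .iUp, .wDown, .wUp, .cDown, .cUp, .s}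

/-- The system SKS: atomic rules plus switch and medial. -/
def SKS : Set Rule := {.aiDown, .aiUp, .awDown, .awUp, .acDown, .acUp, .s, .m}

/-- The system KS: the down fragment of SKS. -/
def KS : Set Rule := {.aiDown, .awDown, .acDown, .s, .m}

/-- A proof of `Q` in the system `Rs` is a derivation from the unit `t` to `Q`. -/
def Proof (Rs : Set Rule) (Q : F) : Prop := Deriv (Step Rs) .tt Q

/-- A rule `r` is derivable from a set `Rs` of rules if every instance of `r`
(with premise `P` and conclusion `Q`) can be replaced by a derivation from
`P` to `Q` using only rules of `Rs`. -/
def RuleDerivable (r : Rule) (Rs : Set Rule) : Prop :=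
  ∀ P Q : F, Step {r} P Q → Deriv (Step Rs) P Q

end DI

namespace DI

/-- A shallow instance of the atomic cut rule `ai↑`: from `[S,(a,ā)]`
infer `S` (no surrounding context, modulo the equivalence). -/
def ShallowCut (P Q : F) : Prop :=
  ∃ (S A : F), A.isAtom ∧ Equiv P (.dis S (.con A A.negF)) ∧ Equiv S Q

theorem Equiv.fill (D : Ctx) {P Q : F} (h : Equiv P Q) : Equiv (D.fill P) (D.fill Q) := by
  induction D with
  | hole => exact h
  | disL D R ih => exact .disCongr ih (.refl R)
  | disR R D ih => exact .disCongr (.refl R) ih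
  | conL D R ih => exact .conCongr ih (.refl R)
  | conR R D ih => exact .conCongr (.refl R) ih

/-- Composition of contexts: `D.comp C` is `C` plugged into the hole of `D`. -/
def Ctx.comp : Ctx → Ctx → Ctx
  | .hole, C => C
  | .disL D Q, C => .disL (D.comp C) Q
  | .disR Q D, C => .disR Q (D.comp C)
  | .conL D Q, C => .conL (D.comp C) Q
  | .conR Q D, C => .conR Q (D.comp C)

theorem Ctx.fill_comp (D C : Ctx) (P : F) : (D.comp C).fill P = D.fill (C.fill P) := by
  induction D <;> simp_all [Ctx.comp, Ctx.fill]

theorem Step.fill {Rs : Set Rule} (D : Ctx) {P Q : F} (h : Step Rs P Q) :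
    Step Rs (D.fill P) (D.fill Q) := by
  obtain ⟨r, hr, C, P', Q', hroot, hP, hQ⟩ := h
  refine ⟨r, hr, D.comp C, P', Q', hroot, ?_, ?_⟩
  · rw [Ctx.fill_comp]; exact hP.fill D
  · rw [Ctx.fill_comp]; exact hQ.fill D

theorem Deriv.fill {Rs : Set Rule} (D : Ctx) {P Q : F} (h : Deriv (Step Rs) P Q) :
    Deriv (Step Rs) (D.fill P) (D.fill Q) := by
  induction h with
  | eqv h => exact .eqv (h.fill D)
  | step h _ ih => exact .step (h.fill D) ih

theorem Step.equiv_left {Rs : Set Rule} {P Q R : F} (h : Equiv P Q) (h' : Step Rs Q R) :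
    Step Rs P R := by
  obtain ⟨r, hr, C, P', Q', hroot, hP, hQ⟩ := h'
  exact ⟨r, hr, C, P', Q', hroot, h.trans hP, hQ⟩

theorem Deriv.equiv_left {Rs : Set Rule} {P Q R : F} (h : Equiv P Q)
    (h' : Deriv (Step Rs) Q R) : Deriv (Step Rs) P R := by
  cases h' with
  | eqv h' => exact .eqv (h.trans h')
  | step h₁ h₂ => exact .step (h₁.equiv_left h) h₂

theorem Deriv.trans {Rs : Set Rule} {P Q R : F} (h : Deriv (Step Rs) P Q)
    (h' : Deriv (Step Rs) Q R) : Deriv (Step Rs) P R := by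
  induction h with
  | eqv h => exact h'.equiv_left h
  | step h _ ih => exact .step h (ih h')

/-- A switch at the root moves `X` out of a conjunction with `Q`. -/
theorem switch_root (Q P X : F) :
    Deriv (Step {Rule.s}) (.con Q (.dis P X)) (.dis (.con Q P) X) :=
  .step ⟨.s, rfl, .hole, _, _, .s Q P X, .refl _, .refl _⟩ (.eqv (.refl _))

/-- By switch alone, the content of the hole can be moved to the root of the formula,
leaving `f` in its place. -/
theorem extrude (C : Ctx) (X : F) :
    Deriv (Step {Rule.s}) (C.fill X) (.dis (C.fill .ff) X) := by
  induction C with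
  | hole => exact .eqv (.symm (.ffDis X))
  | disL C Q ih =>
    refine (ih.fill (.disL .hole Q)).trans (.eqv ?_)
    exact (Equiv.disAssoc _ _ _).trans
      ((Equiv.disCongr (.refl _) (.disComm X Q)).trans (.symm (.disAssoc _ _ _)))
  | disR Q C ih =>
    exact (ih.fill (.disR Q .hole)).trans (.eqv (.symm (.disAssoc _ _ _)))
  | conL C Q ih =>
    refine (ih.fill (.conL .hole Q)).trans (Deriv.equiv_left (.conComm _ _) ?_)
    exact (switch_root Q _ X).trans (.eqv (.disCongr (.conComm _ _) (.refl X)))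
  | conR Q C ih =>
    exact (ih.fill (.conR Q .hole)).trans (switch_root Q _ X)

/-- A switch derivation ending in the premise of a shallow cut can be extended by that cut. -/
theorem Deriv.then_cut {P Q R : F} (h : Deriv (Step {Rule.s}) P Q) (hc : ShallowCut Q R) :
    Deriv (fun P Q => Step {Rule.s} P Q ∨ ShallowCut P Q) P R := by
  induction h with
  | eqv h =>
    obtain ⟨S, A, hA, h₁, h₂⟩ := hc
    exact .step (.inr ⟨S, A, hA, h.trans h₁, h₂⟩) (.eqv (.refl _))
  | step h _ ih => exact .step (.inl h) (ih hc)

/-- The atomic cut rule `ai↑` is derivable from shallow atomic cut and switch: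
every instance of `ai↑`, with premise `C(a,ā)` and conclusion `C{f}`, can be
replaced by a derivation from `C(a,ā)` to `C{f}` using only the switch rule
`s` and shallow instances of `ai↑`. -/
theorem aiUp_from_shallow (A : F) (hA : A.isAtom) (C : Ctx) :
    Deriv (fun P Q => Step {Rule.s} P Q ∨ ShallowCut P Q)
      (C.fill (.con A A.negF)) (C.fill .ff) := by
  exact (extrude C _).then_cut ⟨C.fill .ff, A, hA, .refl _, .refl _⟩

end DI
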